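/- arXiv:1403.5842 — 2 statements merged into one kernel-verified Lean document; each statement's English description precedes it below -/
import Mathlib

section
/- For any difference Lagrangian L and any characteristic Q, and for every component index α, every n ∈ ℤ^p, and every field u : ℤ^p → ℝ^q, the following identity holds: E_α(pr v(L))(n,u) = (pr v(E_α(L)))(n,u) + Σ_{β=1}^q Σ_J (∂Q^β/∂u_J^α)(n−J,u) · E_β(L)(n−J,u), where the last sum runs over the (finite) stencil of Q. -/
open scoped Classical

/-- Multi-indices / lattice points of the lattice `ℤ^p`. -/
abbrev Idx (p : ℕ) : Type := Fin p → ℤ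

/-- Fields `u : ℤ^p → ℝ^q`. -/
abbrev Fld (p q : ℕ) : Type := Idx p → Fin q → ℝ

/-- Difference functions (raw): functions of a lattice point and a field. -/
abbrev DFun (p q : ℕ) : Type := Idx p → Fld p q → ℝ

/-- Replace the value `u^α(m)` of the field `u` by `t`. -/
noncomputable def upd {p q : ℕ} (u : Fld p q) (m : Idx p) (α : Fin q) (t : ℝ) : Fld p q :=
  fun m' β => if m' = m ∧ β = α then t else u m' β

/-- The partial derivative `∂F/∂u_J^α (n,u)`: the derivative of `F(n,u)` with
respect to the value `u^α(n+J)`. -/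
noncomputable def pd {p q : ℕ} (F : DFun p q) (J : Idx p) (α : Fin q) : DFun p q :=
  fun n u => deriv (fun t => F n (upd u (n + J) α t)) (u (n + J) α)

/-- The shift operator `S_K`. -/
def Sh {p q : ℕ} (K : Idx p) (F : DFun p q) : DFun p q := fun n u => F (n + K) u

/-- `F` is a difference function with stencil `S`: `F(n,u)` depends on `u` only
through the finitely many values `u(n+J)`, `J ∈ S`, smoothly in those values. -/
def IsDiffFun {p q : ℕ} (F : DFun p q) (S : Finset (Idx p)) : Prop :=
  ∃ G : Idx p → (({J // J ∈ S} → Fin q → ℝ) → ℝ),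
    (∀ n, ContDiff ℝ (⊤ : ℕ∞) (G n)) ∧ ∀ n u, F n u = G n fun J α => u (n + J.1) α

/-- The prolonged vector field of a characteristic `Q`, acting on a difference
function `F` with stencil `S`:
`(pr v F)(n,u) = Σ_α Σ_{J ∈ S} (S_J Q^α)(n,u) ⬝ ∂F/∂u_J^α(n,u)`. -/
noncomputable def prv {p q : ℕ} (Q : Fin q → DFun p q) (S : Finset (Idx p))
    (F : DFun p q) : DFun p q :=
  fun n u => ∑ α : Fin q, ∑ J ∈ S, Q α (n + J) u * pd F J α n u

/-- The difference divergence of a `p`-tuple of difference functions. -/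
noncomputable def DDiv {p q : ℕ} (P : Fin p → DFun p q) : DFun p q :=
  fun n u => ∑ i : Fin p, (P i (n + Pi.single i (1 : ℤ)) u - P i n u)

/-- The Euler–Lagrange expression `E_α(F)(n,u) = Σ_{J ∈ S} (∂F/∂u_J^α)(n−J,u)`
of a difference function `F` with stencil `S`. -/
noncomputable def EL {p q : ℕ} (S : Finset (Idx p)) (F : DFun p q) (α : Fin q) : DFun p q :=
  fun n u => ∑ J ∈ S, pd F J α (n - J) u

/-- The higher Euler operator
`E_{u_J^α}(L)(n,u) = Σ_{J0 ≥ 0} (∂L/∂u_{J0+J}^α)(n−J0,u)` for a difference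
function `L` depending only on forward values, with stencil `S`
(reindexed by `K = J0 + J`; terms with `K ∉ S` vanish). -/
noncomputable def hEuler {p q : ℕ} (S : Finset (Idx p)) (L : DFun p q) (J : Idx p)
    (α : Fin q) : DFun p q :=
  fun n u => ∑ K ∈ S.filter (fun K => J ≤ K), pd L K α (n - (K - J)) u

/-- `T^i(L)(n,u) = Σ_α Σ_{J ≥ 1_i} (S_{J−1_i} Q^α)(n,u) ⬝ E_{u_J^α}(L)(n−1_i,u)`
(a finite sum: only `J` with `1_i ≤ J ≤ K` for some stencil point `K` contribute). -/
noncomputable def TT {p q : ℕ} (Q : Fin q → DFun p q) (S : Finset (Idx p)) (i : Fin p)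
    (L : DFun p q) : DFun p q :=
  fun n u => ∑ α : Fin q, ∑ J ∈ S.biUnion (fun K => Finset.Icc (Pi.single i (1 : ℤ)) K),
    Q α (n + J - Pi.single i (1 : ℤ)) u * hEuler S L J α (n - Pi.single i (1 : ℤ)) u

/-!
Write `∂_{m,α}` for the derivative with respect to the single value `u^α(m)`. In absolute lattice
coordinates, `E_α(F)(n) = Σ_k ∂_{n,α} (F k)` and `(pr v F)(k) = Σ_{β,m} Q^β(m) ∂_{m,β} (F k)`,
where the sums may run over any sufficiently large finite windows. Applying `∂_{n,α}` to the second
formula with `F = L` and summing over `k`, the product rule gives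
`Σ_{β,m} ∂_{n,α} Q^β(m) E_β(L)(m)` plus `Σ_{β,m} Q^β(m) Σ_k ∂_{n,α} ∂_{m,β} (L k)`, and the latter
is `pr v (E_α(L))` because partial derivatives commute.
-/

open Filter Finset

section LineDeriv

variable {𝕜 E F : Type*} [NontriviallyNormedField 𝕜] [AddCommGroup E] [Module 𝕜 E]
  [NormedAddCommGroup F] [NormedSpace 𝕜 F]

theorem hasLineDerivAt_mul {A : Type*} [NormedRing A] [NormedAlgebra 𝕜 A] {f g : E → A}
    {f' g' : A} {x v : E} (hf : HasLineDerivAt 𝕜 f f' x v) (hg : HasLineDerivAt 𝕜 g g' x v) :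
    HasLineDerivAt 𝕜 (f * g) (f' * g x + f x * g') x v := by
  simpa [HasLineDerivAt] using HasDerivAt.fun_mul hf hg

theorem hasLineDerivAt_sum {ι : Type*} {s : Finset ι} {f : ι → E → F} {f' : ι → F} {x v : E}
    (hf : ∀ i ∈ s, HasLineDerivAt 𝕜 (f i) (f' i) x v) :
    HasLineDerivAt 𝕜 (∑ i ∈ s, f i) (∑ i ∈ s, f' i) x v := by
  simpa only [HasLineDerivAt, Finset.sum_apply] using HasDerivAt.fun_sum hf

variable {H : Type*} [NormedAddCommGroup H] [NormedSpace 𝕜 H] {G : F → H}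

theorem hasLineDerivAt_comp_linearMap {ℓ : E →ₗ[𝕜] F} {x : E}
    (hG : DifferentiableAt 𝕜 G (ℓ x)) (v : E) :
    HasLineDerivAt 𝕜 (G ∘ ℓ) (fderiv 𝕜 G (ℓ x) (ℓ v)) x v := by
  simpa [HasLineDerivAt] using hG.hasFDerivAt.hasLineDerivAt (ℓ v)

theorem lineDeriv_comp_linearMap (hG : Differentiable 𝕜 G) (ℓ : E →ₗ[𝕜] F) (v : E) :
    (fun x ↦ lineDeriv 𝕜 (G ∘ ℓ) x v) = (fun y ↦ fderiv 𝕜 G y (ℓ v)) ∘ ℓ :=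
  funext fun _ ↦ (hasLineDerivAt_comp_linearMap hG.differentiableAt v).lineDeriv

theorem lineDeriv_lineDeriv_comp_linearMap (hG : ContDiff 𝕜 2 G) (ℓ : E →ₗ[𝕜] F) (x v w : E) :
    lineDeriv 𝕜 (fun y ↦ lineDeriv 𝕜 (G ∘ ℓ) y v) x w =
      fderiv 𝕜 (fderiv 𝕜 G) (ℓ x) (ℓ w) (ℓ v) := by
  have hG' : DifferentiableAt 𝕜 (fderiv 𝕜 G) (ℓ x) :=
    (hG.fderiv_right (m := 1) (by norm_num)).differentiable one_ne_zero _
  rw [lineDeriv_comp_linearMap (hG.differentiable two_ne_zero),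
    (hasLineDerivAt_comp_linearMap (hG'.clm_apply (differentiableAt_const _)) w).lineDeriv,
    fderiv_clm_apply hG' (differentiableAt_const _)]
  simp

theorem lineDeriv_comp_linearMap_comm [IsRCLikeNormedField 𝕜] (hG : ContDiff 𝕜 2 G)
    (ℓ : E →ₗ[𝕜] F) (x v w : E) :
    lineDeriv 𝕜 (fun y ↦ lineDeriv 𝕜 (G ∘ ℓ) y v) x w =
      lineDeriv 𝕜 (fun y ↦ lineDeriv 𝕜 (G ∘ ℓ) y w) x v := by
  have hsymm : IsSymmSndFDerivAt 𝕜 G (ℓ x) := hG.contDiffAt.isSymmSndFDerivAt (by simp)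
  rw [lineDeriv_lineDeriv_comp_linearMap hG, lineDeriv_lineDeriv_comp_linearMap hG, hsymm.eq]

end LineDeriv

theorem eventually_sum_comp_equiv_eq {ι κ M : Type*} [AddCommMonoid M] {S : Finset ι} (e : ι ≃ κ)
    {f : κ → M} (hf : ∀ k, e.symm k ∉ S → f k = 0) :
    ∀ᶠ A : Finset κ in atTop, ∑ i ∈ S, f (e i) = ∑ k ∈ A, f k := by
  filter_upwards [eventually_ge_atTop (S.map e.toEmbedding)] with A hA
  rw [← sum_subset hA fun k _ hk ↦ hf k (by simpa [mem_map_equiv] using hk), sum_map]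
  rfl

section DifferenceFunction

variable {p q : ℕ}

/-- The field whose only nonzero value is `u^α(m) = 1`: the direction of `∂/∂u^α(m)`. -/
noncomputable def unitField (m : Idx p) (α : Fin q) : Fld p q := Pi.single m (Pi.single α 1)

/-- The partial derivative `∂f/∂u^α(m)` of a function of the field, with respect to its value at
the absolute lattice point `m` (whereas `pd` is indexed by the displacement from `n`). It is encoded
as a line derivative, which needs no topology on the space of fields. -/
noncomputable def siteDeriv (m : Idx p) (α : Fin q) (f : Fld p q → ℝ) : Fld p q → ℝ :=
  fun u ↦ lineDeriv ℝ f u (unitField m α)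

theorem upd_eq_add_smul_unitField (u : Fld p q) (m : Idx p) (α : Fin q) (t : ℝ) :
    upd u m α t = u + (t - u m α) • unitField m α := by
  funext k β
  by_cases hk : k = m
  · subst hk
    by_cases hβ : β = α
    · subst hβ
      simp [upd, unitField]
    · simp [upd, unitField, hβ]
  · simp [upd, unitField, hk]

theorem pd_eq_siteDeriv (F : DFun p q) (J : Idx p) (α : Fin q) (n : Idx p) :
    pd F J α n = siteDeriv (n + J) α (F n) := by
  funext u
  simp only [pd, siteDeriv, lineDeriv, upd_eq_add_smul_unitField]
  rw [deriv_comp_sub_const (f := fun t ↦ F n (u + t • unitField (n + J) α)), sub_self]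

theorem pd_sub_eq_siteDeriv (F : DFun p q) (J : Idx p) (α : Fin q) (n : Idx p) :
    pd F J α (n - J) = siteDeriv n α (F (n - J)) := by
  rw [pd_eq_siteDeriv, sub_add_cancel]

section Locality

theorem dependsOn_siteDeriv {f : Fld p q → ℝ} {A : Set (Idx p)} (hf : DependsOn f A)
    (m : Idx p) (α : Fin q) : DependsOn (siteDeriv m α f) A := by
  intro u v huv
  have hline (t : ℝ) : f (u + t • unitField m α) = f (v + t • unitField m α) :=
    hf fun k hk ↦ by rw [Pi.add_apply, Pi.add_apply, huv k hk]
  simp only [siteDeriv, lineDeriv, hline]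

theorem siteDeriv_eq_zero_of_dependsOn {f : Fld p q → ℝ} {A : Set (Idx p)} (hf : DependsOn f A)
    {m : Idx p} (hm : m ∉ A) (α : Fin q) : siteDeriv m α f = 0 := by
  funext u
  have hconst (t : ℝ) : f (u + t • unitField m α) = f u := hf fun k hk ↦ by
    simp [unitField, ne_of_mem_of_not_mem hk hm]
  simp [siteDeriv, lineDeriv, hconst]

/-- `F(n,u)` depends on `u` only through the values `u(n+J)`, `J ∈ S`; no regularity is required. -/
def HasStencil (F : DFun p q) (S : Finset (Idx p)) : Prop :=
  ∀ n, DependsOn (F n) {m | m - n ∈ S}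

variable {F : DFun p q} {S : Finset (Idx p)}

theorem HasStencil.siteDeriv_eq_zero (hF : HasStencil F S) {m n : Idx p} (hm : m - n ∉ S)
    (α : Fin q) : siteDeriv m α (F n) = 0 :=
  siteDeriv_eq_zero_of_dependsOn (hF n) hm α

protected theorem HasStencil.prv (hF : HasStencil F S) {Q : Fin q → DFun p q} {SQ : Finset (Idx p)}
    (hQ : ∀ β, HasStencil (Q β) SQ) :
    HasStencil (prv Q S F) (S ∪ S.biUnion fun J ↦ SQ.image fun K ↦ J + K) := by
  intro n u v huv
  refine sum_congr rfl fun β _ ↦ sum_congr rfl fun J hJ ↦ ?_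
  rw [pd_eq_siteDeriv]
  congr 1
  · refine hQ β (n + J) fun m hm ↦ huv m (mem_union_right _ ?_)
    exact mem_biUnion.2 ⟨J, hJ, mem_image.2 ⟨m - (n + J), hm, by abel⟩⟩
  · exact dependsOn_siteDeriv (hF n) _ _ fun m hm ↦ huv m (mem_union_left _ hm)

protected theorem HasStencil.EL (hF : HasStencil F S) (α : Fin q) :
    HasStencil (EL S F α) (S.biUnion fun J ↦ S.image fun K ↦ K - J) := by
  intro n u v huv
  refine sum_congr rfl fun J hJ ↦ ?_
  rw [pd_sub_eq_siteDeriv]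
  refine dependsOn_siteDeriv (hF _) _ _ fun m hm ↦ huv m ?_
  exact mem_biUnion.2 ⟨J, hJ, mem_image.2 ⟨m - (n - J), hm, by abel⟩⟩

theorem HasStencil.eventually_sum_pd_mul_eq (hF : HasStencil F S) (α : Fin q) (n : Idx p)
    (g : DFun p q) :
    ∀ᶠ A : Finset (Idx p) in atTop,
      ∑ J ∈ S, pd F J α (n - J) * g (n - J) = ∑ k ∈ A, siteDeriv n α (F k) * g k := by
  simp only [pd_sub_eq_siteDeriv]
  refine eventually_sum_comp_equiv_eq (f := fun k ↦ siteDeriv n α (F k) * g k)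
    (Equiv.subLeft n) fun k hk ↦ ?_
  rw [Equiv.symm_subLeft, Equiv.subLeft_apply] at hk
  rw [hF.siteDeriv_eq_zero hk, zero_mul]

theorem HasStencil.eventually_EL_eq (hF : HasStencil F S) (α : Fin q) (n : Idx p) :
    ∀ᶠ A : Finset (Idx p) in atTop, EL S F α n = ∑ k ∈ A, siteDeriv n α (F k) := by
  filter_upwards [hF.eventually_sum_pd_mul_eq α n 1] with A hA
  simpa [EL, funext_iff] using hA

theorem HasStencil.eventually_prv_eq (hF : HasStencil F S) (Q : Fin q → DFun p q) (n : Idx p) :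
    ∀ᶠ B : Finset (Idx p) in atTop,
      prv Q S F n = ∑ β, ∑ m ∈ B, Q β m * siteDeriv m β (F n) := by
  have hβ (β : Fin q) : ∀ᶠ B : Finset (Idx p) in atTop,
      ∑ J ∈ S, Q β (n + J) * siteDeriv (n + J) β (F n) =
        ∑ m ∈ B, Q β m * siteDeriv m β (F n) := by
    refine eventually_sum_comp_equiv_eq (f := fun m ↦ Q β m * siteDeriv m β (F n))
      (Equiv.addLeft n) fun m hm ↦ ?_
    rw [hF.siteDeriv_eq_zero (by simpa [sub_eq_neg_add] using hm), mul_zero]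
  filter_upwards [eventually_all.2 hβ] with B hB
  funext u
  simp only [← hB, prv, pd_eq_siteDeriv, Finset.sum_apply, Pi.mul_apply]

end Locality

section Smoothness

/-- Difference functions of class `C^r` with stencil `S`; `IsDiffFun` is the case `r = ∞`. -/
def IsDiffFunOfClass (r : WithTop ℕ∞) (F : DFun p q) (S : Finset (Idx p)) : Prop :=
  ∃ G : Idx p → ({J // J ∈ S} → Fin q → ℝ) → ℝ,
    (∀ n, ContDiff ℝ r (G n)) ∧ ∀ n u, F n u = G n fun J α ↦ u (n + J.1) α

variable {F : DFun p q} {S : Finset (Idx p)} {r : WithTop ℕ∞}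

theorem IsDiffFunOfClass.of_le {s : WithTop ℕ∞} (hF : IsDiffFunOfClass s F S) (hrs : r ≤ s) :
    IsDiffFunOfClass r F S :=
  let ⟨G, hG, hFG⟩ := hF
  ⟨G, fun n ↦ (hG n).of_le hrs, hFG⟩

theorem IsDiffFunOfClass.hasStencil (hF : IsDiffFunOfClass r F S) : HasStencil F S := by
  obtain ⟨G, -, hFG⟩ := hF
  intro n u v huv
  rw [hFG, hFG]
  congr 1
  funext J
  exact huv _ (by simp)

theorem IsDiffFunOfClass.exists_eq_comp_linearMap (hF : IsDiffFunOfClass r F S) :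
    ∃ G : Idx p → ({J // J ∈ S} → Fin q → ℝ) → ℝ, (∀ n, ContDiff ℝ r (G n)) ∧
      ∀ n, F n = G n ∘ LinearMap.funLeft ℝ (Fin q → ℝ) fun J : {J // J ∈ S} ↦ n + J.1 :=
  let ⟨G, hG, hFG⟩ := hF
  ⟨G, hG, fun n ↦ funext (hFG n)⟩

theorem IsDiffFunOfClass.hasLineDerivAt (hF : IsDiffFunOfClass r F S) (hr : r ≠ 0)
    (n m : Idx p) (α : Fin q) (u : Fld p q) :
    HasLineDerivAt ℝ (F n) (siteDeriv m α (F n) u) u (unitField m α) := by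
  obtain ⟨G, hG, hFG⟩ := hF.exists_eq_comp_linearMap
  rw [hFG]
  exact (hasLineDerivAt_comp_linearMap
    ((hG n).differentiable hr _) _).lineDifferentiableAt.hasLineDerivAt

protected theorem IsDiffFunOfClass.siteDeriv (hF : IsDiffFunOfClass (r + 1) F S)
    (m : Idx p) (α : Fin q) :
    IsDiffFunOfClass r (fun n ↦ siteDeriv m α (F n)) S := by
  obtain ⟨G, hG, hFG⟩ := hF.exists_eq_comp_linearMap
  refine ⟨fun n y ↦ fderiv ℝ (G n) y (LinearMap.funLeft ℝ _ (fun J ↦ n + J.1) (unitField m α)),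
    fun n ↦ ((hG n).fderiv_right le_rfl).clm_apply contDiff_const, fun n u ↦ ?_⟩
  simp only [hFG]
  exact congrFun (lineDeriv_comp_linearMap ((hG n).differentiable (by simp)) _ _) u

theorem IsDiffFunOfClass.siteDeriv_comm (hF : IsDiffFunOfClass 2 F S) (n m k : Idx p)
    (α β : Fin q) :
    siteDeriv m α (siteDeriv k β (F n)) = siteDeriv k β (siteDeriv m α (F n)) := by
  obtain ⟨G, hG, hFG⟩ := hF.exists_eq_comp_linearMap
  rw [hFG]
  exact funext fun u ↦ lineDeriv_comp_linearMap_comm (hG n) _ _ _ _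

end Smoothness

section Variation

variable {L : DFun p q} {S : Finset (Idx p)}

theorem IsDiffFunOfClass.eventually_siteDeriv_EL_eq (hL : IsDiffFunOfClass 2 L S)
    (α : Fin q) (n : Idx p) :
    ∀ᶠ A : Finset (Idx p) in atTop, ∀ m β,
      siteDeriv m β (EL S L α n) = ∑ k ∈ A, siteDeriv n α (siteDeriv m β (L k)) := by
  filter_upwards [hL.hasStencil.eventually_EL_eq α n] with A hA m β
  simp only [hA, hL.siteDeriv_comm _ n m]
  funext u
  rw [Finset.sum_apply]
  exact (hasLineDerivAt_sum fun k _ ↦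
    (hL.siteDeriv (r := 1) n α).hasLineDerivAt one_ne_zero k m β u).lineDeriv

theorem IsDiffFunOfClass.siteDeriv_sum_mul_siteDeriv (hL : IsDiffFunOfClass 2 L S)
    {Q : Fin q → DFun p q} {SQ : Finset (Idx p)} (hQ : ∀ β, IsDiffFunOfClass 1 (Q β) SQ)
    (B : Finset (Idx p)) (n k : Idx p) (α : Fin q) :
    siteDeriv n α (∑ β, ∑ m ∈ B, Q β m * siteDeriv m β (L k)) =
      ∑ β, ∑ m ∈ B, (siteDeriv n α (Q β m) * siteDeriv m β (L k) +
        Q β m * siteDeriv n α (siteDeriv m β (L k))) := by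
  funext u
  simp only [Finset.sum_apply]
  exact (hasLineDerivAt_sum fun β _ ↦ hasLineDerivAt_sum fun m _ ↦
    hasLineDerivAt_mul ((hQ β).hasLineDerivAt one_ne_zero m n α u)
      ((hL.siteDeriv (r := 1) m β).hasLineDerivAt one_ne_zero k n α u)).lineDeriv

theorem stmt_6_general (hL : IsDiffFunOfClass 2 L S)
    {Q : Fin q → DFun p q} {SQ : Finset (Idx p)} (hQ : ∀ β, IsDiffFunOfClass 1 (Q β) SQ)
    (α : Fin q) (n : Idx p) :
    EL (S ∪ S.biUnion fun J ↦ SQ.image fun K ↦ J + K) (prv Q S L) α n =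
      prv Q (S.biUnion fun J ↦ S.image fun K ↦ K - J) (EL S L α) n +
        ∑ β, ∑ J ∈ SQ, pd (Q β) J α (n - J) * EL S L β (n - J) := by
  have hLS := hL.hasStencil
  have hQS β := (hQ β).hasStencil
  -- `A` is the window for the point `k` where `L` is evaluated, `B` for the point `m` of `Q`.
  obtain ⟨A, hA_prv, hA_EL, hA_var⟩ := (((hLS.prv hQS).eventually_EL_eq α n).and
    ((eventually_all.2 fun β ↦ (eventually_all_finset SQ).2 fun J _ ↦
      hLS.eventually_EL_eq β (n - J)).and (hL.eventually_siteDeriv_EL_eq α n))).exists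
  obtain ⟨B, hB_L, hB_EL, hB_Q⟩ :=
    (((eventually_all_finset A).2 fun k _ ↦ hLS.eventually_prv_eq Q k).and
      (((hLS.EL α).eventually_prv_eq Q n).and (eventually_all.2 fun β ↦
        (hQS β).eventually_sum_pd_mul_eq α n fun m ↦ ∑ k ∈ A, siteDeriv m β (L k)))).exists
  have hQ_sum (β : Fin q) : ∑ J ∈ SQ, pd (Q β) J α (n - J) * EL S L β (n - J) =
      ∑ m ∈ B, siteDeriv n α (Q β m) * ∑ k ∈ A, siteDeriv m β (L k) := by
    rw [← hB_Q]
    exact sum_congr rfl fun J hJ ↦ by rw [hA_EL β J hJ]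
  calc
    _ = ∑ k ∈ A, siteDeriv n α (prv Q S L k) := hA_prv
    _ = ∑ k ∈ A, ∑ β, ∑ m ∈ B, (siteDeriv n α (Q β m) * siteDeriv m β (L k) +
          Q β m * siteDeriv n α (siteDeriv m β (L k))) :=
      sum_congr rfl fun k hk ↦ by rw [hB_L k hk, hL.siteDeriv_sum_mul_siteDeriv hQ]
    _ = ∑ β, ∑ m ∈ B, ∑ k ∈ A, (siteDeriv n α (Q β m) * siteDeriv m β (L k) +
          Q β m * siteDeriv n α (siteDeriv m β (L k))) := by
      rw [sum_comm]
      exact sum_congr rfl fun β _ ↦ sum_comm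
    _ = ∑ β, ∑ m ∈ B, Q β m * siteDeriv m β (EL S L α n) +
          ∑ β, ∑ m ∈ B, siteDeriv n α (Q β m) * ∑ k ∈ A, siteDeriv m β (L k) := by
      simp only [hA_var, mul_sum, sum_add_distrib]
      exact add_comm _ _
    _ = _ := by simp only [hB_EL, hQ_sum]

end Variation

end DifferenceFunction

/-- For any difference Lagrangian `L` and any characteristic
`Q`, and all `α`, `n`, `u`:
`E_α(pr v(L))(n,u) = (pr v(E_α(L)))(n,u) + Σ_β Σ_J (∂Q^β/∂u_J^α)(n−J,u) ⬝ E_β(L)(n−J,u)`,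
the last sum running over the stencil of `Q`.  (The stencil of `pr v(L)` is
`S ∪ {J + K : J ∈ S, K ∈ SQ}` and the stencil of `E_α(L)` is
`{K − J : J, K ∈ S}`.) -/
theorem stmt_6 {p q : ℕ} (hp : 1 ≤ p) (hq : 1 ≤ q)
    (L : DFun p q) (S : Finset (Idx p)) (hL : IsDiffFun L S)
    (hS : ∀ K ∈ S, (0 : Idx p) ≤ K)
    (Q : Fin q → DFun p q) (SQ : Finset (Idx p)) (hQ : ∀ α, IsDiffFun (Q α) SQ)
    (α : Fin q) (n : Idx p) (u : Fld p q) :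
    EL (S ∪ S.biUnion fun J => SQ.image fun K => J + K) (prv Q S L) α n u
      = prv Q (S.biUnion fun J => S.image fun K => K - J) (EL S L α) n u
        + ∑ β : Fin q, ∑ J ∈ SQ, pd (Q β) J α (n - J) u * EL S L β (n - J) u := by
  have hL' : IsDiffFunOfClass 2 L S := IsDiffFunOfClass.of_le hL ENat.LEInfty.out
  have hQ' β : IsDiffFunOfClass 1 (Q β) SQ := IsDiffFunOfClass.of_le (hQ β) ENat.LEInfty.out
  simpa using congrFun (stmt_6_general hL' hQ' α n) u
end

section
/- Theorem: let Q be a Lie point characteristic that generates variational symmetries of the difference Lagrangian L, i.e. (pr v L)(n,u) = 0 for all n and u. Then the prolonged vector field annihilates each component of the associated Noether conservation law: (pr v(T^i(L)))(n,u) = 0 for every i ∈ {1,…,p}, every n ∈ ℤ^p, and every field u : ℤ^p → ℝ^q. -/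
open scoped Classical

/-!
The prolonged vector field is the directional derivative along the vector field `u ↦ (m ↦ Q(m,u))`
on the space of fields. As `Q` is a point characteristic, the value of this vector field at a site
depends only on the value of the field there, so it commutes with its truncation to any set of
sites. Regrouping the terms `S_{J-1_i} Q^α · ∂L/∂u_K^α` of `T^i(L)(n,u)` by `d = K - J`, and
writing `v_{≥ n}` for the truncation to the sites `≥ n`, one finds
`T^i(L)(n,·) = Σ_{d ≥ 0} v_{≥ n} (L(n - 1_i - d,·))`. Hence
`pr v (T^i(L)(n,·)) = Σ_{d ≥ 0} v_{≥ n} (pr v L(n - 1_i - d,·)) = 0`.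
-/

open scoped ContDiff
open VectorField

section ComponentwiseVectorFields

variable {𝕜 κ : Type*} [NontriviallyNormedField 𝕜]
  {V : κ → Type*} [∀ k, NormedAddCommGroup (V k)] [∀ k, NormedSpace 𝕜 (V k)]
  {X Y : ∀ k, V k → V k} {x : ∀ k, V k}

lemma hasFDerivAt_piMap [Finite κ] (hX : ∀ k, DifferentiableAt 𝕜 (X k) (x k)) :
    HasFDerivAt (Pi.map X)
      (ContinuousLinearMap.pi fun k => (fderiv 𝕜 (X k) (x k)).comp (ContinuousLinearMap.proj k))
      x :=
  have := Fintype.ofFinite κ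
  hasFDerivAt_pi.2 fun k => (hX k).hasFDerivAt.comp x (hasFDerivAt_apply k x)

lemma lieBracket_piMap [Fintype κ] (hX : ∀ k, DifferentiableAt 𝕜 (X k) (x k))
    (hY : ∀ k, DifferentiableAt 𝕜 (Y k) (x k)) :
    lieBracket 𝕜 (Pi.map X) (Pi.map Y) x = fun k => lieBracket 𝕜 (X k) (Y k) (x k) := by
  funext k
  simp [lieBracket, (hasFDerivAt_piMap hX).fderiv, (hasFDerivAt_piMap hY).fderiv]

end ComponentwiseVectorFields

section Truncation

variable {𝕜 κ V : Type*} [NontriviallyNormedField 𝕜] [NormedAddCommGroup V] [NormedSpace 𝕜 V]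
  {X : κ → V → V}

lemma differentiable_indicator_apply (hX : ∀ k, Differentiable 𝕜 (X k)) (A : Set κ) (k : κ) :
    Differentiable 𝕜 (A.indicator X k) := by
  by_cases hk : k ∈ A
  · simpa only [Set.indicator_of_mem hk] using hX k
  · rw [Set.indicator_of_notMem hk]
    exact differentiable_const 0

lemma lieBracket_piMap_indicator [Fintype κ] (hX : ∀ k, Differentiable 𝕜 (X k)) (A : Set κ) :
    lieBracket 𝕜 (Pi.map X) (Pi.map (A.indicator X)) = 0 := by
  funext x k
  rw [lieBracket_piMap (fun k => hX k _) fun k => differentiable_indicator_apply hX A k _]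
  by_cases hk : k ∈ A <;> simp [hk]

end Truncation

lemma exists_hasFDerivAt_fderiv_piMap_indicator {κ V F : Type*} [Fintype κ] [NormedAddCommGroup V]
    [NormedSpace ℝ V] [NormedAddCommGroup F] [NormedSpace ℝ F] {f : (κ → V) → F}
    {X : κ → V → V} (hf : ContDiff ℝ 2 f) (hX : ∀ k, Differentiable ℝ (X k))
    (hinv : ∀ x, fderiv ℝ f x (Pi.map X x) = 0) (A : Set κ) (x : κ → V) :
    ∃ f' : (κ → V) →L[ℝ] F,
      HasFDerivAt (fun y => fderiv ℝ f y (Pi.map (A.indicator X) y)) f' x ∧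
        f' (Pi.map X x) = 0 := by
  have hdX : DifferentiableAt ℝ (Pi.map X) x :=
    (hasFDerivAt_piMap fun k => hX k _).differentiableAt
  have hdA : DifferentiableAt ℝ (Pi.map (A.indicator X)) x :=
    (hasFDerivAt_piMap fun k => differentiable_indicator_apply hX A k _).differentiableAt
  have hdf : DifferentiableAt ℝ (fderiv ℝ f) x :=
    (hf.fderiv_right (m := 1) le_rfl).differentiable one_ne_zero x
  have hbracket := fderiv_apply_lieBracket hf.contDiffAt (by simp) hdA hdX
  simp only [lieBracket_piMap_indicator hX, hinv, Pi.zero_apply, map_zero, fderiv_fun_const,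
    zero_apply, sub_zero] at hbracket
  exact ⟨_, (hdf.clm_apply hdA).hasFDerivAt, hbracket.symm⟩

lemma hasLineDerivAt_comp_linearMap_s9 {𝕜 E F W : Type*} [NontriviallyNormedField 𝕜]
    [NormedAddCommGroup E] [NormedSpace 𝕜 E] [NormedAddCommGroup F] [NormedSpace 𝕜 F]
    [AddCommGroup W] [Module 𝕜 W] {g : E → F} {g' : E →L[𝕜] F} {ℓ : W →ₗ[𝕜] E} {x : W}
    (hg : HasFDerivAt g g' (ℓ x)) (v : W) :
    HasLineDerivAt 𝕜 (g ∘ ℓ) (g' (ℓ v)) x v := by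
  simpa only [HasLineDerivAt, Function.comp_apply, map_add, map_smul] using
    hg.hasLineDerivAt (ℓ v)

lemma sum_biUnion_Icc_sum_filter_le {G M : Type*} [AddCommGroup G] [PartialOrder G]
    [IsOrderedAddMonoid G] [LocallyFiniteOrder G] [DecidableEq G] [DecidableLE G]
    [AddCommMonoid M] (S : Finset G) (a : G) (f : G → G → M) :
    ∑ J ∈ S.biUnion fun K => Finset.Icc a K, ∑ K ∈ S with J ≤ K, f J K =
      ∑ d ∈ S.biUnion fun K => Finset.Icc 0 (K - a), ∑ K ∈ S with d + a ≤ K, f (K - d) K := by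
  calc
    _ = ∑ K ∈ S, ∑ J ∈ Finset.Icc a K, f J K := by
      refine Finset.sum_comm' fun J K => ?_
      simp only [Finset.mem_biUnion, Finset.mem_filter, Finset.mem_Icc]
      grind
    _ = ∑ K ∈ S, ∑ d ∈ Finset.Icc 0 (K - a), f (K - d) K := by
      refine Finset.sum_congr rfl fun K _ => ?_
      refine Finset.sum_nbij' (K - ·) (K - ·) ?_ ?_ ?_ ?_ ?_ <;> simp +contextual [le_sub_comm]
    _ = _ := by
      refine Finset.sum_comm' fun K d => ?_
      simp only [Finset.mem_biUnion, Finset.mem_filter, Finset.mem_Icc, le_sub_iff_add_le]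
      grind

section DifferenceFunctions

variable {p q : ℕ} {Q : Fin q → DFun p q} {F : DFun p q} {S : Finset (Idx p)}

/-- The values of a field at the sites `n + J` with `J` in the stencil `S`, as a linear map from
fields to a finite-dimensional space. -/
def stencilValues (S : Finset (Idx p)) (n : Idx p) : Fld p q →ₗ[ℝ] (S → Fin q → ℝ) :=
  LinearMap.funLeft ℝ (Fin q → ℝ) fun J : S => n + J

lemma stencilValues_apply (n : Idx p) (u : Fld p q) (J : S) :
    stencilValues S n u J = u (n + J) := rfl

lemma stencilValues_surjective (n : Idx p) :
    Function.Surjective (stencilValues S n : Fld p q →ₗ[ℝ] (S → Fin q → ℝ)) :=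
  LinearMap.funLeft_surjective_of_injective ℝ (Fin q → ℝ) _
    ((add_right_injective n).comp Subtype.val_injective)

lemma stencilValues_single (n : Idx p) (J : S) (y : Fin q → ℝ) :
    stencilValues S n (Pi.single (n + J) y) = Pi.single J y := by
  funext K
  simp only [stencilValues_apply, Pi.single_apply, add_right_inj, Subtype.ext_iff]

lemma stencilValues_indicator_piMap (n : Idx p) (A : Set (Idx p))
    (X : Idx p → (Fin q → ℝ) → Fin q → ℝ) (u : Fld p q) :
    stencilValues S n (A.indicator (Pi.map X u)) =
      Pi.map (Set.indicator {J : S | n + J ∈ A} fun J => X (n + J)) (stencilValues S n u) := by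
  funext J
  by_cases hJ : n + J.1 ∈ A <;> simp [stencilValues_apply, hJ]

lemma IsDiffFun.exists_eq_comp (hF : IsDiffFun F S) (n : Idx p) :
    ∃ G : (S → Fin q → ℝ) → ℝ, ContDiff ℝ ∞ G ∧ F n = G ∘ stencilValues S n := by
  obtain ⟨G, hG, hFG⟩ := hF
  exact ⟨G n, hG n, funext (hFG n)⟩

lemma lineDeriv_comp_stencilValues {G : (S → Fin q → ℝ) → ℝ} (hG : Differentiable ℝ G)
    (n : Idx p) (u w : Fld p q) :
    lineDeriv ℝ (G ∘ stencilValues S n) u w =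
      fderiv ℝ G (stencilValues S n u) (stencilValues S n w) :=
  (hasLineDerivAt_comp_linearMap_s9 (hG _).hasFDerivAt w).lineDeriv

lemma upd_add (u : Fld p q) (m : Idx p) (α : Fin q) (t : ℝ) :
    upd u m α (u m α + t) = u + t • (Pi.single m (Pi.single α 1) : Fld p q) := by
  funext m' β
  by_cases hm : m' = m
  · subst hm
    by_cases hβ : β = α
    · subst hβ
      simp [upd]
    · simp [upd, hβ]
  · simp [upd, hm]

lemma pd_eq_lineDeriv (F : DFun p q) (J : Idx p) (α : Fin q) (n : Idx p) (u : Fld p q) :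
    pd F J α n u = lineDeriv ℝ (F n) u (Pi.single (n + J) (Pi.single α 1)) := by
  simp only [lineDeriv, ← upd_add]
  rw [deriv_comp_const_add (fun t => F n (upd u (n + J) α t)), add_zero, pd]

lemma sum_smul_single_single {ι κ R : Type*} [Fintype ι] [Fintype κ]
    [DecidableEq ι] [DecidableEq κ] [Semiring R] (y : ι → κ → R) :
    ∑ a, ∑ i, y i a • (Pi.single i (Pi.single a 1) : ι → κ → R) = y := by
  funext i a
  simp [Finset.sum_apply, Pi.single_apply]

lemma IsDiffFun.sum_mul_pd_eq_lineDeriv (hF : IsDiffFun F S) (n : Idx p) (u w : Fld p q) :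
    ∑ α, ∑ J ∈ S, w (n + J) α * pd F J α n u = lineDeriv ℝ (F n) u w := by
  obtain ⟨G, hG, hFG⟩ := hF.exists_eq_comp n
  have hG1 : Differentiable ℝ G := hG.differentiable (by simp)
  simp only [pd_eq_lineDeriv, hFG, lineDeriv_comp_stencilValues hG1]
  conv_rhs => rw [← sum_smul_single_single (stencilValues S n w)]
  simp only [map_sum, map_smul, smul_eq_mul, stencilValues_apply, ← Finset.sum_coe_sort S,
    stencilValues_single]

/-- The vector field on the space of fields whose component at the site `m` is `Q(m,u)`; the
derivative along it is the prolonged vector field of `Q`. -/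
def charField (Q : Fin q → DFun p q) (u : Fld p q) : Fld p q := fun m α => Q α m u

lemma IsDiffFun.prv_eq_lineDeriv (hF : IsDiffFun F S) (Q : Fin q → DFun p q) (n : Idx p)
    (u : Fld p q) : prv Q S F n u = lineDeriv ℝ (F n) u (charField Q u) :=
  hF.sum_mul_pd_eq_lineDeriv n u (charField Q u)

lemma exists_charField_eq_piMap (hQ : ∀ α, IsDiffFun (Q α) {(0 : Idx p)}) :
    ∃ X : Idx p → (Fin q → ℝ) → Fin q → ℝ,
      (∀ m, ContDiff ℝ ∞ (X m)) ∧ charField Q = Pi.map X := by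
  choose G hG hQG using hQ
  refine ⟨fun m y α => G α m fun _ => y, fun m => contDiff_pi.2 fun α =>
    (hG α m).comp (contDiff_pi.2 fun _ => contDiff_id), ?_⟩
  funext u m α
  simp only [charField, hQG, Pi.map_apply]
  congr 1
  funext ⟨J, hJ⟩ β
  obtain rfl := Finset.mem_singleton.1 hJ
  rw [add_zero]

lemma IsDiffFun.hasLineDerivAt_lineDeriv_indicator (hF : IsDiffFun F S)
    {X : Idx p → (Fin q → ℝ) → Fin q → ℝ} (hX : ∀ m, Differentiable ℝ (X m)) {n : Idx p}
    (hinv : ∀ u, lineDeriv ℝ (F n) u (Pi.map X u) = 0) (A : Set (Idx p)) (u : Fld p q) :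
    HasLineDerivAt ℝ (fun w => lineDeriv ℝ (F n) w (A.indicator (Pi.map X w))) 0 u
      (Pi.map X u) := by
  obtain ⟨G, hG, hFG⟩ := hF.exists_eq_comp n
  have hG1 : Differentiable ℝ G := hG.differentiable (by simp)
  simp only [hFG, lineDeriv_comp_stencilValues hG1, stencilValues_indicator_piMap] at hinv ⊢
  have hinvG : ∀ y, fderiv ℝ G y (Pi.map (fun J : S => X (n + J)) y) = 0 :=
    (stencilValues_surjective n).forall.2 hinv
  obtain ⟨f', hf', hf'0⟩ := exists_hasFDerivAt_fderiv_piMap_indicator (contDiff_infty.1 hG 2)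
    (fun J : S => hX (n + J)) hinvG {J | n + J ∈ A} (stencilValues S n u)
  exact hf'0 ▸ hasLineDerivAt_comp_linearMap_s9 hf' (Pi.map X u)

lemma TT_eq_sum_lineDeriv {L : DFun p q} (hL : IsDiffFun L S) (Q : Fin q → DFun p q) (i : Fin p)
    (n : Idx p) (u : Fld p q) :
    TT Q S i L n u = ∑ d ∈ S.biUnion fun K => Finset.Icc 0 (K - Pi.single i 1),
      lineDeriv ℝ (L (n - Pi.single i 1 - d)) u ((Set.Ici n).indicator (charField Q u)) := by
  simp only [TT, hEuler, Finset.mul_sum, sum_biUnion_Icc_sum_filter_le]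
  rw [Finset.sum_comm]
  refine Finset.sum_congr rfl fun d _ => ?_
  rw [← hL.sum_mul_pd_eq_lineDeriv]
  refine Finset.sum_congr rfl fun α _ => ?_
  rw [Finset.sum_filter]
  refine Finset.sum_congr rfl fun K _ => ?_
  have hsite : n - Pi.single i 1 - d + K = n + (K - d) - Pi.single i 1 := by abel
  have hmem : n - Pi.single i 1 - d + K ∈ Set.Ici n ↔ d + Pi.single i 1 ≤ K := by
    rw [Set.mem_Ici, show n - Pi.single i 1 - d + K = n + (K - (d + Pi.single i 1)) by abel,
      le_add_iff_nonneg_right, sub_nonneg]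
  by_cases hK : d + Pi.single i 1 ≤ K
  · rw [if_pos hK, Set.indicator_of_mem (hmem.2 hK), charField, hsite, sub_sub_cancel]
  · rw [if_neg hK, Set.indicator_of_notMem (hmem.not.2 hK), Pi.zero_apply, zero_mul]

end DifferenceFunctions

theorem stmt_9_general {p q : ℕ} (Q : Fin q → DFun p q)
    (hQ : ∀ α, IsDiffFun (Q α) ({(0 : Idx p)} : Finset (Idx p)))
    (L : DFun p q) (S : Finset (Idx p)) (hL : IsDiffFun L S)
    (hsym : ∀ (n : Idx p) (u : Fld p q), prv Q S L n u = 0)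
    (i : Fin p) (ST : Finset (Idx p)) (hST : IsDiffFun (TT Q S i L) ST)
    (n : Idx p) (u : Fld p q) :
    prv Q ST (TT Q S i L) n u = 0 := by
  obtain ⟨X, hX, hQX⟩ := exists_charField_eq_piMap hQ
  have hinv : ∀ m w, lineDeriv ℝ (L m) w (Pi.map X w) = 0 := fun m w => by
    rw [← hQX, ← hL.prv_eq_lineDeriv, hsym]
  have hTT : TT Q S i L n = fun w => ∑ d ∈ S.biUnion fun K => Finset.Icc 0 (K - Pi.single i 1),
      lineDeriv ℝ (L (n - Pi.single i 1 - d)) w ((Set.Ici n).indicator (Pi.map X w)) := by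
    funext w
    rw [TT_eq_sum_lineDeriv hL, hQX]
  have hderiv : HasLineDerivAt ℝ (TT Q S i L n) 0 u (Pi.map X u) := by
    rw [hTT]
    simpa only [Finset.sum_const_zero] using!
      HasDerivAt.fun_sum fun d _ => hL.hasLineDerivAt_lineDeriv_indicator
        (fun m => (hX m).differentiable (by simp)) (hinv (n - Pi.single i 1 - d)) (Set.Ici n) u
  rw [hST.prv_eq_lineDeriv, hQX, hderiv.lineDeriv]

/-- Let `Q` be a Lie point characteristic generating
variational symmetries of the difference Lagrangian `L`, i.e. `(pr v L)(n,u) = 0`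
for all `n` and `u`.  Then the prolonged vector field annihilates each component
of the associated Noether conservation law: `(pr v(T^i(L)))(n,u) = 0` for every
`i`, `n`, and `u`. -/
theorem stmt_9 {p q : ℕ} (hp : 1 ≤ p) (hq : 1 ≤ q)
    (Q : Fin q → DFun p q)
    (hQ : ∀ α, IsDiffFun (Q α) ({(0 : Idx p)} : Finset (Idx p)))
    (L : DFun p q) (S : Finset (Idx p)) (hL : IsDiffFun L S)
    (hS : ∀ K ∈ S, (0 : Idx p) ≤ K)
    (hsym : ∀ (n : Idx p) (u : Fld p q), prv Q S L n u = 0)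
    (i : Fin p) (ST : Finset (Idx p)) (hST : IsDiffFun (TT Q S i L) ST)
    (n : Idx p) (u : Fld p q) :
    prv Q ST (TT Q S i L) n u = 0 :=
  stmt_9_general Q hQ L S hL hsym i ST hST n u
end
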